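/- arXiv:1302.5535 — 2 statements merged into one kernel-verified Lean document; each statement's English description precedes it below -/
import Mathlib

section
/- Let A = A(ω, ε) be the 4×4 Toh matrix with 0 < ω < 2 and ε > 0. Then φ_3(A) = Ψ_{3,ℝ,ℂ}(A), i.e., the third ideal GMRES approximation of A is attained as the worst case over complex unit initial vectors when minimizing over real polynomials. -/
open Polynomial Matrix

/-- The Euclidean norm of a real vector. -/
noncomputable def euclNorm {ι : Type*} [Fintype ι] (v : ι → ℝ) : ℝ :=
  Real.sqrt (∑ i, v i ^ 2)

/-- The Euclidean norm of a complex vector. -/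
noncomputable def euclNormC {ι : Type*} [Fintype ι] (v : ι → ℂ) : ℝ :=
  Real.sqrt (∑ i, ‖v i‖ ^ 2)

/-- The Euclidean inner product of two real vectors. -/
noncomputable def edot {ι : Type*} [Fintype ι] (u v : ι → ℝ) : ℝ := ∑ i, u i * v i

/-- `p ∈ π_k`: real polynomials of degree at most `k` with value `1` at the origin. -/
def IsPik (k : ℕ) (p : Polynomial ℝ) : Prop := p.natDegree ≤ k ∧ p.eval 0 = 1

/-- `p ∈ π_{k,ℂ}`: complex polynomials of degree at most `k` with value `1` at the origin. -/
def IsPikC (k : ℕ) (p : Polynomial ℂ) : Prop := p.natDegree ≤ k ∧ p.eval 0 = 1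

/-- The `k`-th GMRES residual norm `min_{p ∈ π_k} ‖p(A)v‖`. -/
noncomputable def gmresVal {ι : Type*} [Fintype ι] [DecidableEq ι]
    (A : Matrix ι ι ℝ) (k : ℕ) (v : ι → ℝ) : ℝ :=
  sInf {s : ℝ | ∃ p : Polynomial ℝ, IsPik k p ∧ s = euclNorm ((Polynomial.aeval A p).mulVec v)}

/-- The `k`-th worst-case GMRES approximation `Ψ_k(A) = max_{‖v‖=1} min_{p ∈ π_k} ‖p(A)v‖`. -/
noncomputable def Psi {ι : Type*} [Fintype ι] [DecidableEq ι]
    (A : Matrix ι ι ℝ) (k : ℕ) : ℝ :=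
  sSup {r : ℝ | ∃ v : ι → ℝ, euclNorm v = 1 ∧ r = gmresVal A k v}

/-- `d(A)`: the degree of the minimal polynomial of `A`. -/
noncomputable def dA {ι : Type*} [Fintype ι] [DecidableEq ι] (A : Matrix ι ι ℝ) : ℕ :=
  (minpoly ℝ A).natDegree

/-- `d(A,b)`: the smallest degree of a nonzero polynomial `q` with `q(A)b = 0`. -/
noncomputable def dAb {ι : Type*} [Fintype ι] [DecidableEq ι]
    (A : Matrix ι ι ℝ) (b : ι → ℝ) : ℕ :=
  sInf {d : ℕ | ∃ q : Polynomial ℝ, q ≠ 0 ∧ q.natDegree = d ∧ (Polynomial.aeval A q).mulVec b = 0}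

/-- `r = GMRES(A,b,k)`: `r = p(A)b` for some `p ∈ π_k` minimizing `‖p(A)b‖` over `π_k`. -/
def IsGmresRes {ι : Type*} [Fintype ι] [DecidableEq ι]
    (A : Matrix ι ι ℝ) (k : ℕ) (b r : ι → ℝ) : Prop :=
  ∃ p : Polynomial ℝ, IsPik k p ∧ r = (Polynomial.aeval A p).mulVec b ∧
    ∀ q : Polynomial ℝ, IsPik k q → euclNorm r ≤ euclNorm ((Polynomial.aeval A q).mulVec b)

/-- `p` is the `k`-th GMRES polynomial of `A` and `b`: `p ∈ π_k` minimizes `‖p(A)b‖`. -/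
def IsGmresPoly {ι : Type*} [Fintype ι] [DecidableEq ι]
    (A : Matrix ι ι ℝ) (k : ℕ) (b : ι → ℝ) (p : Polynomial ℝ) : Prop :=
  IsPik k p ∧ ∀ q : Polynomial ℝ, IsPik k q →
    euclNorm ((Polynomial.aeval A p).mulVec b) ≤ euclNorm ((Polynomial.aeval A q).mulVec b)

/-- The Krylov subspace `K_k(A,b) = span{b, Ab, …, A^{k-1}b}`. -/
noncomputable def krylov {ι : Type*} [Fintype ι] [DecidableEq ι]
    (A : Matrix ι ι ℝ) (k : ℕ) (b : ι → ℝ) : Submodule ℝ (ι → ℝ) :=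
  Submodule.span ℝ (Set.range fun i : Fin k => (A ^ (i : ℕ)).mulVec b)

/-- `b` satisfies the cross equality for `A` and step `k`. -/
def CrossEq {ι : Type*} [Fintype ι] [DecidableEq ι]
    (A : Matrix ι ι ℝ) (k : ℕ) (b : ι → ℝ) : Prop :=
  ∀ r s : ι → ℝ, IsGmresRes A k b r → IsGmresRes Aᵀ k ((euclNorm r)⁻¹ • r) s →
    b = (euclNorm s)⁻¹ • s

/-- The Krylov matrix `K(v) = [Av, A²v, …, A^k v]`. -/
noncomputable def Kmat {n : ℕ} (A : Matrix (Fin n) (Fin n) ℝ) (k : ℕ) (v : Fin n → ℝ) :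
    Matrix (Fin n) (Fin k) ℝ :=
  Matrix.of fun i j => (A ^ ((j : ℕ) + 1)).mulVec v i

/-- `γ(v) = (K(v)ᵀK(v))⁻¹ K(v)ᵀ v`. -/
noncomputable def gammaVec {n : ℕ} (A : Matrix (Fin n) (Fin n) ℝ) (k : ℕ) (v : Fin n → ℝ) :
    Fin k → ℝ :=
  ((Kmat A k v)ᵀ * Kmat A k v)⁻¹ *ᵥ ((Kmat A k v)ᵀ *ᵥ v)

/-- `g(v) = min_{c ∈ ℝ^k} ‖v - K(v)c‖²`. -/
noncomputable def gFun {n : ℕ} (A : Matrix (Fin n) (Fin n) ℝ) (k : ℕ) (v : Fin n → ℝ) : ℝ :=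
  sInf {s : ℝ | ∃ c : Fin k → ℝ, s = euclNorm (v - Kmat A k v *ᵥ c) ^ 2}

/-- `p(z; c) = 1 - ∑_{j=1}^k c_j z^j`. -/
noncomputable def pPoly {k : ℕ} (c : Fin k → ℝ) : Polynomial ℝ :=
  1 - ∑ j : Fin k, Polynomial.C (c j) * Polynomial.X ^ ((j : ℕ) + 1)

/-- `f(c,v) = ‖p(A;c)v‖²`. -/
noncomputable def fFun {n k : ℕ} (A : Matrix (Fin n) (Fin n) ℝ) (c : Fin k → ℝ)
    (v : Fin n → ℝ) : ℝ :=
  euclNorm ((Polynomial.aeval A (pPoly c)).mulVec v) ^ 2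

/-- `F(c,v) = f(c,v)/(vᵀv)`. -/
noncomputable def FFun {n k : ℕ} (A : Matrix (Fin n) (Fin n) ℝ) (c : Fin k → ℝ)
    (v : Fin n → ℝ) : ℝ :=
  fFun A c v / edot v v

/-- The Toh matrix `A(ω, ε)`. -/
noncomputable def tohMatrix (ω ε : ℝ) : Matrix (Fin 4) (Fin 4) ℝ :=
  !![1, ε, 0, 0; 0, -1, ω / ε, 0; 0, 0, 1, ε; 0, 0, 0, -1]

/-- `p` is a `k`-th worst-case GMRES polynomial of `A`. -/
def IsWCPoly {ι : Type*} [Fintype ι] [DecidableEq ι]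
    (A : Matrix ι ι ℝ) (k : ℕ) (p : Polynomial ℝ) : Prop :=
  IsPik k p ∧ ∃ b : ι → ℝ, euclNorm b = 1 ∧
    (∀ q : Polynomial ℝ, IsPik k q →
      euclNorm ((Polynomial.aeval A p).mulVec b) ≤ euclNorm ((Polynomial.aeval A q).mulVec b)) ∧
    euclNorm ((Polynomial.aeval A p).mulVec b) = Psi A k

/-- The spectral (Euclidean operator) norm of a real matrix. -/
noncomputable def specNorm {ι : Type*} [Fintype ι] (M : Matrix ι ι ℝ) : ℝ :=
  sSup {r : ℝ | ∃ v : ι → ℝ, euclNorm v = 1 ∧ r = euclNorm (M *ᵥ v)}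

/-- The `k`-th ideal GMRES approximation `φ_k(A) = min_{p ∈ π_k} ‖p(A)‖`. -/
noncomputable def phiIdeal {ι : Type*} [Fintype ι] [DecidableEq ι]
    (A : Matrix ι ι ℝ) (k : ℕ) : ℝ :=
  sInf {r : ℝ | ∃ p : Polynomial ℝ, IsPik k p ∧ r = specNorm (Polynomial.aeval A p)}

/-- Complexification of a real matrix. -/
noncomputable def matC {ι : Type*} (A : Matrix ι ι ℝ) : Matrix ι ι ℂ :=
  A.map fun x => (x : ℂ)

/-- Complexification of a real vector. -/
noncomputable def vecC {ι : Type*} (b : ι → ℝ) : ι → ℂ := fun i => (b i : ℂ)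

/-- `Ψ_{k,ℂ,ℝ}(A)`: complex polynomials, real initial vectors. -/
noncomputable def PsiCR {ι : Type*} [Fintype ι] [DecidableEq ι]
    (A : Matrix ι ι ℝ) (k : ℕ) : ℝ :=
  sSup {r : ℝ | ∃ b : ι → ℝ, euclNorm b = 1 ∧
    r = sInf {s : ℝ | ∃ p : Polynomial ℂ, IsPikC k p ∧
      s = euclNormC ((Polynomial.aeval (matC A) p).mulVec (vecC b))}}

/-- `Ψ_{k,ℂ,ℂ}(A)`: complex polynomials, complex initial vectors. -/
noncomputable def PsiCC {ι : Type*} [Fintype ι] [DecidableEq ι]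
    (A : Matrix ι ι ℝ) (k : ℕ) : ℝ :=
  sSup {r : ℝ | ∃ b : ι → ℂ, euclNormC b = 1 ∧
    r = sInf {s : ℝ | ∃ p : Polynomial ℂ, IsPikC k p ∧
      s = euclNormC ((Polynomial.aeval (matC A) p).mulVec b)}}

/-- `Ψ_{k,ℝ,ℂ}(A)`: real polynomials, complex initial vectors. -/
noncomputable def PsiRC {ι : Type*} [Fintype ι] [DecidableEq ι]
    (A : Matrix ι ι ℝ) (k : ℕ) : ℝ :=
  sSup {r : ℝ | ∃ b : ι → ℂ, euclNormC b = 1 ∧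
    r = sInf {s : ℝ | ∃ p : Polynomial ℝ, IsPik k p ∧
      s = euclNormC ((Polynomial.aeval (matC A) (p.map (algebraMap ℝ ℂ))).mulVec b)}}

/-- `φ_{k,ℝ,ℝ}(A)`. -/
noncomputable def phiRR {ι : Type*} [Fintype ι] [DecidableEq ι]
    (A : Matrix ι ι ℝ) (k : ℕ) : ℝ :=
  sInf {r : ℝ | ∃ p : Polynomial ℝ, IsPik k p ∧
    r = sSup {s : ℝ | ∃ b : ι → ℝ, euclNorm b = 1 ∧
      s = euclNorm ((Polynomial.aeval A p).mulVec b)}}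

/-- `φ_{k,ℂ,ℝ}(A)`. -/
noncomputable def phiCR {ι : Type*} [Fintype ι] [DecidableEq ι]
    (A : Matrix ι ι ℝ) (k : ℕ) : ℝ :=
  sInf {r : ℝ | ∃ p : Polynomial ℂ, IsPikC k p ∧
    r = sSup {s : ℝ | ∃ b : ι → ℝ, euclNorm b = 1 ∧
      s = euclNormC ((Polynomial.aeval (matC A) p).mulVec (vecC b))}}

/-- `φ_{k,ℝ,ℂ}(A)`. -/
noncomputable def phiRC {ι : Type*} [Fintype ι] [DecidableEq ι]
    (A : Matrix ι ι ℝ) (k : ℕ) : ℝ :=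
  sInf {r : ℝ | ∃ p : Polynomial ℝ, IsPik k p ∧
    r = sSup {s : ℝ | ∃ b : ι → ℂ, euclNormC b = 1 ∧
      s = euclNormC ((Polynomial.aeval (matC A) (p.map (algebraMap ℝ ℂ))).mulVec b)}}

/-- `φ_{k,ℂ,ℂ}(A)`. -/
noncomputable def phiCC {ι : Type*} [Fintype ι] [DecidableEq ι]
    (A : Matrix ι ι ℝ) (k : ℕ) : ℝ :=
  sInf {r : ℝ | ∃ p : Polynomial ℂ, IsPikC k p ∧
    r = sSup {s : ℝ | ∃ b : ι → ℂ, euclNormC b = 1 ∧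
      s = euclNormC ((Polynomial.aeval (matC A) p).mulVec b)}}


lemma le_of_sq_le_sq_aux {a b : ℝ} (h : a ^ 2 ≤ b ^ 2) (hb : 0 ≤ b) : a ≤ b :=
  (le_abs_self a).trans (abs_le_of_sq_le_sq h hb)

lemma esq {ι : Type*} [Fintype ι] (v : ι → ℝ) : euclNorm v ^ 2 = ∑ i, v i ^ 2 :=
  Real.sq_sqrt (Finset.sum_nonneg fun _ _ => sq_nonneg _)

lemma ennn {ι : Type*} [Fintype ι] (v : ι → ℝ) : 0 ≤ euclNorm v := Real.sqrt_nonneg _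

lemma ecnn {ι : Type*} [Fintype ι] (v : ι → ℂ) : 0 ≤ euclNormC v := Real.sqrt_nonneg _

lemma ecsq {ι : Type*} [Fintype ι] (v : ι → ℂ) :
    euclNormC v ^ 2 = euclNorm (fun i => (v i).re) ^ 2 + euclNorm (fun i => (v i).im) ^ 2 := by
  rw [esq, esq, ← Finset.sum_add_distrib]
  unfold euclNormC
  rw [Real.sq_sqrt (Finset.sum_nonneg fun _ _ => sq_nonneg _)]
  refine Finset.sum_congr rfl fun i _ => ?_
  rw [← Complex.normSq_eq_norm_sq, Complex.normSq_apply]; ring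

lemma matC_mulVec_sq {ι : Type*} [Fintype ι] (M : Matrix ι ι ℝ) (b : ι → ℂ) :
    euclNormC (matC M *ᵥ b) ^ 2 =
      euclNorm (M *ᵥ fun i => (b i).re) ^ 2 + euclNorm (M *ᵥ fun i => (b i).im) ^ 2 := by
  rw [ecsq]
  congr 3 <;> funext i <;> simp [matC, Matrix.mulVec, dotProduct]

lemma aeval_matC {ι : Type*} [Fintype ι] [DecidableEq ι] (A : Matrix ι ι ℝ) (p : Polynomial ℝ) :
    Polynomial.aeval (matC A) (p.map (algebraMap ℝ ℂ)) = matC (Polynomial.aeval A p) := by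
  rw [Polynomial.aeval_map_algebraMap]
  have h := Polynomial.aeval_algHom_apply (Algebra.ofId ℝ ℂ).mapMatrix A p
  exact h

lemma bdd_spec {ι : Type*} [Fintype ι] (M : Matrix ι ι ℝ) :
    BddAbove {r : ℝ | ∃ v : ι → ℝ, euclNorm v = 1 ∧ r = euclNorm (M *ᵥ v)} := by
  refine ⟨Real.sqrt (∑ i, ∑ j, M i j ^ 2), ?_⟩
  rintro r ⟨v, hv, rfl⟩
  refine Real.sqrt_le_sqrt (Finset.sum_le_sum fun i _ => ?_)
  have h := Finset.sum_mul_sq_le_sq_mul_sq Finset.univ (fun j => M i j) v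
  rw [← esq v, hv] at h
  simpa [Matrix.mulVec, dotProduct] using h

lemma toh_sq (ω ε : ℝ) (hε : 0 < ε) : tohMatrix ω ε ^ 2 =
    !![1, 0, ω, 0; 0, 1, 0, ω; 0, 0, 1, 0; 0, 0, 0, 1] := by
  have := hε.ne'
  rw [pow_two]
  ext i j
  fin_cases i <;> fin_cases j <;>
    simp [tohMatrix, Matrix.mul_apply, Fin.sum_univ_four] <;> field_simp

lemma toh_cube (ω ε : ℝ) (hε : 0 < ε) : tohMatrix ω ε ^ 3 =
    !![1, ε, ω, ω * ε; 0, -1, ω / ε, -ω; 0, 0, 1, ε; 0, 0, 0, -1] := by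
  rw [pow_succ, toh_sq ω ε hε]
  ext i j
  fin_cases i <;> fin_cases j <;>
    simp [tohMatrix, Matrix.mul_apply, Fin.sum_univ_four]

/-- The optimal value. -/
noncomputable def tohN (ω : ℝ) : ℝ := 4 * ω / (4 + ω ^ 2)

/-- The optimal polynomial. -/
noncomputable def tohP (ω : ℝ) : Polynomial ℝ :=
  1 - Polynomial.C ((4 - ω ^ 2) / (4 + ω ^ 2)) * Polynomial.X ^ 2

lemma tohP_pik (ω : ℝ) : IsPik 3 (tohP ω) := by
  constructor
  · unfold tohP
    compute_degree
    norm_num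
  · simp [tohP]

lemma toh_upper (ω ε : ℝ) (hω1 : 0 < ω) (hω2 : ω < 2) (hε : 0 < ε) (v : Fin 4 → ℝ) :
    euclNorm ((Polynomial.aeval (tohMatrix ω ε) (tohP ω)) *ᵥ v) ^ 2 ≤
      tohN ω ^ 2 * euclNorm v ^ 2 := by
  have hD : (4 + ω ^ 2) ≠ 0 := by positivity
  rw [esq, esq]
  have h : Polynomial.aeval (tohMatrix ω ε) (tohP ω) =
      1 - ((4 - ω ^ 2) / (4 + ω ^ 2)) •
        !![1, 0, ω, 0; 0, 1, 0, ω; 0, 0, 1, 0; 0, 0, 0, (1:ℝ)] := by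
    rw [← toh_sq ω ε hε]
    simp [tohP, Algebra.smul_def]
  rw [h]
  have key : tohN ω ^ 2 * ∑ i, v i ^ 2 - ∑ i, ((1 - ((4 - ω ^ 2) / (4 + ω ^ 2)) •
        !![1, 0, ω, 0; 0, 1, 0, ω; 0, 0, 1, 0; 0, 0, 0, (1:ℝ)]) *ᵥ v) i ^ 2 =
      4 * ω ^ 2 * (4 - ω ^ 2) / (4 + ω ^ 2) ^ 2 *
        ((v 0 + ω / 2 * v 2) ^ 2 + (v 1 + ω / 2 * v 3) ^ 2) := by
    simp [Matrix.sub_mulVec, Matrix.smul_mulVec, Fin.sum_univ_four, Matrix.mulVec, dotProduct,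
      tohN]
    field_simp
    ring
  have : 0 ≤ 4 - ω ^ 2 := by nlinarith
  have : 0 ≤ 4 * ω ^ 2 * (4 - ω ^ 2) / (4 + ω ^ 2) ^ 2 *
        ((v 0 + ω / 2 * v 2) ^ 2 + (v 1 + ω / 2 * v 3) ^ 2) := by positivity
  linarith

lemma toh_lower (ω ε : ℝ) (hε : 0 < ε) (p : Polynomial ℝ) (hp : IsPik 3 p) :
    2 * (4 + ω ^ 2) * tohN ω ^ 2 ≤
      euclNorm ((Polynomial.aeval (tohMatrix ω ε) p) *ᵥ ![-ω, 0, 2, 0]) ^ 2 +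
      euclNorm ((Polynomial.aeval (tohMatrix ω ε) p) *ᵥ ![0, -ω, 0, 2]) ^ 2 := by
  have hD : (4 + ω ^ 2) ≠ 0 := by positivity
  have hD' : 0 < (4 + ω ^ 2) := by positivity
  have h0 : p.coeff 0 = 1 := by rw [Polynomial.coeff_zero_eq_eval_zero]; exact hp.2
  rw [Polynomial.aeval_eq_sum_range' (n := 4) (by have := hp.1; omega)]
  simp only [Finset.sum_range_succ, Finset.sum_range_zero, h0, toh_sq ω ε hε, toh_cube ω ε hε,
    pow_one, pow_zero, one_smul, zero_add]
  generalize p.coeff 1 = α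
  generalize p.coeff 2 = β
  generalize p.coeff 3 = γ
  set M := (1 + α • tohMatrix ω ε + β • !![1, 0, ω, 0; 0, 1, 0, ω; 0, 0, 1, 0; 0, 0, 0, 1] +
    γ • !![1, ε, ω, ω * ε; 0, -1, ω / ε, -ω; 0, 0, 1, ε; 0, 0, 0, -1]) with hM
  have hin : -2 * (M *ᵥ ![-ω, 0, 2, 0]) 0 + ω * (M *ᵥ ![-ω, 0, 2, 0]) 2 +
      (-2 * (M *ᵥ ![0, -ω, 0, 2]) 1 + ω * (M *ᵥ ![0, -ω, 0, 2]) 3) = 8 * ω := by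
    simp [hM, Matrix.add_mulVec, Matrix.smul_mulVec, tohMatrix, Matrix.mulVec, dotProduct,
      Fin.sum_univ_four]
    ring
  rw [esq, esq, Fin.sum_univ_four, Fin.sum_univ_four]
  generalize M *ᵥ ![-ω, 0, 2, 0] = x at *
  generalize M *ᵥ ![0, -ω, 0, 2] = y at *
  have e : 2 * (4 + ω ^ 2) * tohN ω ^ 2 = (8 * ω) ^ 2 / (2 * (4 + ω ^ 2)) := by
    unfold tohN; field_simp; ring
  rw [e, div_le_iff₀ (by positivity), ← hin]
  nlinarith [sq_nonneg (ω * x 0 + 2 * x 2), sq_nonneg (ω * y 1 + 2 * y 3),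
    sq_nonneg (2 * y 1 - 2 * x 0), sq_nonneg (x 0 - y 1), sq_nonneg (x 2 - y 3),
    sq_nonneg (ω * x 0 + 2 * y 3), sq_nonneg (ω * y 1 + 2 * x 2), sq_nonneg (ω * (x 2 - y 3)),
    sq_nonneg (x 1), sq_nonneg (x 3), sq_nonneg (y 0), sq_nonneg (y 2),
    mul_nonneg hD'.le (sq_nonneg (x 1)), mul_nonneg hD'.le (sq_nonneg (x 3)),
    mul_nonneg hD'.le (sq_nonneg (y 0)), mul_nonneg hD'.le (sq_nonneg (y 2))]

lemma tohN_nonneg (ω : ℝ) (h : 0 < ω) : 0 ≤ tohN ω := by unfold tohN; positivity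

lemma euclNorm_smul {ι : Type*} [Fintype ι] (c : ℝ) (v : ι → ℝ) :
    euclNorm (c • v) ^ 2 = c ^ 2 * euclNorm v ^ 2 := by
  rw [esq, esq, Finset.mul_sum]
  exact Finset.sum_congr rfl fun i _ => by simp [mul_pow]

lemma spec_ge (M : Matrix (Fin 4) (Fin 4) ℝ) (v : Fin 4 → ℝ) :
    euclNorm (M *ᵥ v) ^ 2 ≤ specNorm M ^ 2 * euclNorm v ^ 2 := by
  have hs : 0 ≤ specNorm M := Real.sSup_nonneg (by rintro _ ⟨w, _, rfl⟩; exact ennn _)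
  by_cases hv : euclNorm v = 0
  · have h2 : ∑ i, v i ^ 2 = 0 := by rw [← esq, hv]; norm_num
    have h3 : v = 0 := by
      funext i
      have := (Finset.sum_eq_zero_iff_of_nonneg (fun i _ => sq_nonneg (v i))).1 h2 i
        (Finset.mem_univ i)
      simpa using this
    rw [h3, Matrix.mulVec_zero, esq]
    simp
  · have h1 : euclNorm ((euclNorm v)⁻¹ • v) ^ 2 = 1 := by
      rw [euclNorm_smul]; field_simp
    have h2 : euclNorm ((euclNorm v)⁻¹ • v) = 1 := by
      rw [← Real.sqrt_sq (ennn ((euclNorm v)⁻¹ • v)), h1, Real.sqrt_one]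
    have h3 : euclNorm (M *ᵥ ((euclNorm v)⁻¹ • v)) ≤ specNorm M :=
      le_csSup (bdd_spec M) ⟨_, h2, rfl⟩
    have h4 := pow_le_pow_left₀ (ennn _) h3 2
    rw [Matrix.mulVec_smul, euclNorm_smul] at h4
    have hp : 0 < euclNorm v ^ 2 := by positivity
    rwa [inv_pow, inv_mul_eq_div, div_le_iff₀ hp] at h4

lemma phi_eq (ω ε : ℝ) (hω1 : 0 < ω) (hω2 : ω < 2) (hε : 0 < ε) :
    phiIdeal (tohMatrix ω ε) 3 = tohN ω := by
  have hN := tohN_nonneg ω hω1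
  have lower : ∀ p, IsPik 3 p → tohN ω ≤ specNorm (Polynomial.aeval (tohMatrix ω ε) p) := by
    intro p hp
    have hs : 0 ≤ specNorm (Polynomial.aeval (tohMatrix ω ε) p) :=
      Real.sSup_nonneg (by rintro _ ⟨w, _, rfl⟩; exact ennn _)
    have h := toh_lower ω ε hε p hp
    have h1 := spec_ge (Polynomial.aeval (tohMatrix ω ε) p) ![-ω, 0, 2, 0]
    have h2 := spec_ge (Polynomial.aeval (tohMatrix ω ε) p) ![0, -ω, 0, 2]
    rw [esq ![-ω, 0, 2, 0]] at h1
    rw [esq ![0, -ω, 0, 2]] at h2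
    simp [Fin.sum_univ_four] at h1 h2
    refine le_of_sq_le_sq_aux ?_ hs
    have hD' : 0 < 2 * (4 + ω ^ 2) := by positivity
    refine le_of_mul_le_mul_left ?_ hD'
    linarith
  apply le_antisymm
  · refine le_trans (csInf_le ⟨tohN ω, ?_⟩ ⟨tohP ω, tohP_pik ω, rfl⟩) ?_
    · rintro _ ⟨p, hp, rfl⟩; exact lower p hp
    · refine Real.sSup_le ?_ hN
      rintro _ ⟨v, hv, rfl⟩
      have := toh_upper ω ε hω1 hω2 hε v
      rw [hv] at this
      refine le_of_sq_le_sq_aux ?_ hN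
      linarith
  · refine le_csInf ⟨_, tohP ω, tohP_pik ω, rfl⟩ ?_
    rintro _ ⟨p, hp, rfl⟩; exact lower p hp

lemma psi_eq (ω ε : ℝ) (hω1 : 0 < ω) (hω2 : ω < 2) (hε : 0 < ε) :
    PsiRC (tohMatrix ω ε) 3 = tohN ω := by
  have hN := tohN_nonneg ω hω1
  have upper : ∀ b : Fin 4 → ℂ, euclNormC b = 1 → sInf {s : ℝ | ∃ p : Polynomial ℝ, IsPik 3 p ∧
      s = euclNormC ((Polynomial.aeval (matC (tohMatrix ω ε))
        (p.map (algebraMap ℝ ℂ))).mulVec b)} ≤ tohN ω := by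
    intro b hb
    refine le_trans (csInf_le ⟨0, ?_⟩ ⟨tohP ω, tohP_pik ω, rfl⟩) ?_
    · rintro _ ⟨p, hp, rfl⟩; exact ecnn _
    · refine le_of_sq_le_sq_aux ?_ hN
      rw [aeval_matC, matC_mulVec_sq]
      have h1 := toh_upper ω ε hω1 hω2 hε (fun i => (b i).re)
      have h2 := toh_upper ω ε hω1 hω2 hε (fun i => (b i).im)
      have h3 := ecsq b
      rw [hb] at h3
      calc _ ≤ _ := add_le_add h1 h2
        _ = tohN ω ^ 2 := by rw [← mul_add, ← h3]; ring
  apply le_antisymm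
  · refine Real.sSup_le ?_ hN
    rintro _ ⟨b, hb, rfl⟩; exact upper b hb
  · set c : ℝ := (Real.sqrt (2 * (4 + ω ^ 2)))⁻¹ with hc
    have hD' : 0 < 2 * (4 + ω ^ 2) := by positivity
    have hc2 : c ^ 2 = (2 * (4 + ω ^ 2))⁻¹ := by
      rw [hc, inv_pow, Real.sq_sqrt hD'.le]
    let b : Fin 4 → ℂ := fun i =>
      ⟨(c • ![-ω, 0, 2, 0] : Fin 4 → ℝ) i, (c • ![0, -ω, 0, 2] : Fin 4 → ℝ) i⟩
    have hre : (fun i => (b i).re) = c • ![-ω, 0, 2, 0] := rfl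
    have him : (fun i => (b i).im) = c • ![0, -ω, 0, 2] := rfl
    have hb2 : euclNormC b ^ 2 = 1 := by
      rw [ecsq, hre, him, euclNorm_smul, euclNorm_smul, hc2, esq, esq]
      simp [Fin.sum_univ_four]
      field_simp
      ring
    have hb : euclNormC b = 1 := by
      rw [← Real.sqrt_sq (ecnn b), hb2, Real.sqrt_one]
    refine le_trans ?_ (le_csSup ⟨tohN ω, ?_⟩ ⟨b, hb, rfl⟩)
    · refine le_csInf ⟨_, tohP ω, tohP_pik ω, rfl⟩ ?_
      rintro _ ⟨p, hp, rfl⟩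
      refine le_of_sq_le_sq_aux ?_ (ecnn _)
      rw [aeval_matC, matC_mulVec_sq, hre, him, Matrix.mulVec_smul, Matrix.mulVec_smul,
        euclNorm_smul, euclNorm_smul, hc2, ← mul_add, inv_mul_eq_div, le_div_iff₀ hD']
      have := toh_lower ω ε hε p hp
      linarith
    · rintro _ ⟨b, hb, rfl⟩; exact upper b hb



/-- For the Toh matrix `A = A(ω,ε)` with `0 < ω < 2`, `ε > 0`,
`φ_3(A) = Ψ_{3,ℝ,ℂ}(A)`. -/
theorem toh_ideal_eq_worst_case_complex_vectors (ω ε : ℝ)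
    (hω1 : 0 < ω) (hω2 : ω < 2) (hε : 0 < ε) :
    phiIdeal (tohMatrix ω ε) 3 = PsiRC (tohMatrix ω ε) 3 := by
  rw [phi_eq ω ε hω1 hω2 hε, psi_eq ω ε hω1 hω2 hε]
end

section
/- Let A ∈ ℝ^{n×n} be nonsingular and 1 ≤ k ≤ d(A) − 1. Suppose there exist two unit norm vectors b, c ∈ ℝ^n whose k-th GMRES polynomials p_b, p_c ∈ π_{k,ℝ} are distinct (p_b ≠ p_c) and which are both k-th worst-case GMRES initial vectors, i.e., ‖p_b(A)b‖ = ‖p_c(A)c‖ = Ψ_{k,ℝ,ℝ}(A). Then Ψ_{k,ℝ,ℝ}(A) < Ψ_{k,ℝ,ℂ}(A). -/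
open Polynomial Matrix

/-- Squared Euclidean norm. -/
noncomputable def sqn {n : ℕ} (v : Fin n → ℝ) : ℝ := ∑ i, v i ^ 2

lemma sqn_nonneg {n : ℕ} (v : Fin n → ℝ) : 0 ≤ sqn v :=
  Finset.sum_nonneg fun i _ => sq_nonneg _

lemma euclNorm_eq {n : ℕ} (v : Fin n → ℝ) : euclNorm v = Real.sqrt (sqn v) := rfl

lemma euclNorm_sq {n : ℕ} (v : Fin n → ℝ) : euclNorm v ^ 2 = sqn v :=
  Real.sq_sqrt (sqn_nonneg v)

lemma sqn_eq_zero {n : ℕ} (v : Fin n → ℝ) (h : sqn v = 0) : v = 0 := by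
  funext i
  have := (Finset.sum_eq_zero_iff_of_nonneg (fun i _ => sq_nonneg (v i))).1 h i (Finset.mem_univ i)
  simpa using this

lemma isPik_one (k : ℕ) : IsPik k 1 := ⟨by simp, by simp⟩

/-- Evaluation of polynomials in `A` at the pair `(b, c)`. -/
noncomputable def pairMap {n : ℕ} (A : Matrix (Fin n) (Fin n) ℝ) (b c : Fin n → ℝ) :
    ℝ[X] →ₗ[ℝ] EuclideanSpace ℝ (Fin n ⊕ Fin n) where
  toFun p := WithLp.toLp 2 (Sum.elim ((aeval A p).mulVec b) ((aeval A p).mulVec c))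
  map_add' p q := by
    ext i
    rcases i with i | i <;> simp [Matrix.add_mulVec]
  map_smul' r p := by
    ext i
    rcases i with i | i <;> simp [Matrix.smul_mulVec]

lemma norm_pairMap {n : ℕ} (A : Matrix (Fin n) (Fin n) ℝ) (b c : Fin n → ℝ) (p : ℝ[X]) :
    ‖pairMap A b c p‖ ^ 2 = sqn ((aeval A p).mulVec b) + sqn ((aeval A p).mulVec c) := by
  rw [EuclideanSpace.norm_sq_eq]
  simp [pairMap, sqn]

lemma exists_min {n : ℕ} (A : Matrix (Fin n) (Fin n) ℝ) (k : ℕ) (b c : Fin n → ℝ) :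
    ∃ p, IsPik k p ∧ ∀ q, IsPik k q →
      sqn ((aeval A p).mulVec b) + sqn ((aeval A p).mulVec c) ≤
      sqn ((aeval A q).mulVec b) + sqn ((aeval A q).mulVec c) := by
  let M : Submodule ℝ ℝ[X] := degreeLE ℝ k ⊓ LinearMap.ker (Polynomial.leval (0:ℝ))
  let V := M.map (pairMap A b c)
  have hproj : V.starProjection (pairMap A b c 1) ∈ V := Submodule.starProjection_apply_mem _ _
  obtain ⟨m, hm, hmV⟩ := hproj
  have hm1 : m.natDegree ≤ k := natDegree_le_iff_degree_le.2 (mem_degreeLE.1 hm.1)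
  have hm2 : m.eval 0 = 0 := by simpa [Polynomial.leval] using hm.2
  refine ⟨1 - m, ⟨?_, by simp [hm2]⟩, fun q hq => ?_⟩
  · exact (natDegree_sub_le _ _).trans (by simpa using hm1)
  have hq' : 1 - q ∈ M := by
    refine ⟨mem_degreeLE.2 (natDegree_le_iff_degree_le.1
      ((natDegree_sub_le _ _).trans (by simpa using hq.1))), ?_⟩
    simp [Polynomial.leval, hq.2]
  rw [← norm_pairMap, ← norm_pairMap, map_sub, hmV]
  have h1 : ‖pairMap A b c 1 - V.starProjection (pairMap A b c 1)‖ ≤ ‖pairMap A b c q‖ := by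
    rw [Submodule.starProjection_minimal]
    have := ciInf_le (f := fun x : V => ‖pairMap A b c 1 - x‖)
      ⟨0, by rintro _ ⟨x, rfl⟩; exact norm_nonneg _⟩
      ⟨pairMap A b c (1 - q), Submodule.mem_map_of_mem hq'⟩
    refine this.trans (le_of_eq ?_)
    simp
  gcongr

lemma exists_vec {n : ℕ} (A : Matrix (Fin n) (Fin n) ℝ) (k : ℕ) (hk : k < dA A) :
    ∃ v : Fin n → ℝ, ∀ p, IsPik k p → (aeval A p).mulVec v ≠ 0 := by
  by_contra! hcon
  have hint : IsIntegral ℝ A := Algebra.IsIntegral.isIntegral A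
  have hm0 : minpoly ℝ A ≠ 0 := minpoly.ne_zero hint
  haveI := fintypeSubtypeMonicDvd (minpoly ℝ A) hm0
  let ι := {g : {g : ℝ[X] // g.Monic ∧ g ∣ minpoly ℝ A} // g.1.natDegree ≤ k}
  haveI : Finite ι := inferInstance
  have hcov : ⋃ i : ι, ((LinearMap.ker (Matrix.mulVecLin (aeval A i.1.1)) :
      Submodule ℝ (Fin n → ℝ)) : Set (Fin n → ℝ)) = Set.univ := by
    rw [Set.eq_univ_iff_forall]
    intro v
    obtain ⟨p, hp, hpv⟩ := hcon v
    have hp0 : p ≠ 0 := by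
      rintro rfl
      have := hp.2
      simp at this
    set g := EuclideanDomain.gcd p (minpoly ℝ A) with hg
    have hg0 : g ≠ 0 := by
      intro h
      exact hp0 (EuclideanDomain.gcd_eq_zero_iff.1 h).1
    have hgp : g ∣ p := EuclideanDomain.gcd_dvd_left _ _
    have hgm : g ∣ minpoly ℝ A := EuclideanDomain.gcd_dvd_right _ _
    have hgv : (aeval A g).mulVec v = 0 := by
      rw [hg, EuclideanDomain.gcd_eq_gcd_ab, map_add, mul_comm p, map_mul, map_mul,
        minpoly.aeval, Matrix.add_mulVec, ← Matrix.mulVec_mulVec, hpv]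
      simp
    have hdeg : (g * C g.leadingCoeff⁻¹).natDegree ≤ k := by
      refine natDegree_mul_le.trans ?_
      simpa using (natDegree_le_of_dvd hgp hp0).trans hp.1
    have hu : IsUnit (C g.leadingCoeff⁻¹) :=
      isUnit_C.2 (isUnit_iff_ne_zero.2 (inv_ne_zero (leadingCoeff_ne_zero.2 hg0)))
    refine Set.mem_iUnion.2 ⟨⟨⟨g * C g.leadingCoeff⁻¹,
      monic_mul_leadingCoeff_inv hg0, (hu.mul_right_dvd).2 hgm⟩, hdeg⟩, ?_⟩
    change (aeval A (g * C g.leadingCoeff⁻¹)).mulVec v = 0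
    rw [mul_comm, map_mul, ← Matrix.mulVec_mulVec, hgv, Matrix.mulVec_zero]
  obtain ⟨⟨⟨g, hg1, hg2⟩, hg3⟩, hi⟩ := Subspace.exists_eq_top_of_iUnion_eq_univ hcov
  have hgA : aeval A g = 0 := by
    have h0 := LinearMap.ker_eq_top.1 hi
    ext i j
    have := congrFun (LinearMap.congr_fun h0 (Pi.single j 1)) i
    simpa using this
  have := natDegree_le_of_dvd (minpoly.dvd ℝ A hgA) hg1.ne_zero
  simp only [dA] at hk
  simp only at hg3
  omega

lemma no_ann {n : ℕ} (A : Matrix (Fin n) (Fin n) ℝ) (hA : IsUnit A) (k : ℕ) (b : Fin n → ℝ)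
    (h : ∀ p, IsPik k p → (aeval A p).mulVec b ≠ 0) (q : ℝ[X]) (hq : q.natDegree ≤ k)
    (hqb : (aeval A q).mulVec b = 0) : q = 0 := by
  by_contra hq0
  obtain ⟨r, hr, hnd⟩ := exists_eq_pow_rootMultiplicity_mul_and_not_dvd q hq0 0
  set j := q.rootMultiplicity 0
  simp only [map_zero, sub_zero] at hr hnd
  have hr0 : r.eval 0 ≠ 0 := by
    intro h0
    apply hnd
    have := dvd_iff_isRoot.2 (show r.IsRoot 0 from h0)
    simpa using this
  have hrd : r.natDegree ≤ k :=
    (natDegree_le_of_dvd (Dvd.intro_left _ hr.symm) hq0).trans hq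
  have hrb : (aeval A r).mulVec b = 0 := by
    rw [hr, map_mul, map_pow, aeval_X, ← Matrix.mulVec_mulVec] at hqb
    have hinj := Matrix.mulVec_injective_of_isUnit (hA.pow j)
    exact hinj (by simpa using hqb)
  refine h (C (r.eval 0)⁻¹ * r) ⟨(natDegree_C_mul_le _ _).trans hrd, by simp [hr0]⟩ ?_
  rw [map_mul, ← Matrix.mulVec_mulVec, hrb, Matrix.mulVec_zero]

lemma unique_poly {n : ℕ} (A : Matrix (Fin n) (Fin n) ℝ) (hA : IsUnit A) (k : ℕ) (b : Fin n → ℝ)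
    (m : ℝ) (hm : 0 < m) (h : ∀ p, IsPik k p → m ≤ sqn ((aeval A p).mulVec b))
    (p q : ℝ[X]) (hp : IsPik k p) (hq : IsPik k q)
    (hpm : sqn ((aeval A p).mulVec b) = m) (hqm : sqn ((aeval A q).mulVec b) = m) : p = q := by
  have hne : ∀ p, IsPik k p → (aeval A p).mulVec b ≠ 0 := by
    intro p hp h0
    have := h p hp
    rw [h0] at this
    simp [sqn] at this
    linarith
  rw [← sub_eq_zero]
  refine no_ann A hA k b hne _ ((natDegree_sub_le _ _).trans (max_le hp.1 hq.1)) ?_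
  have hmid : IsPik k (C (1/2) * (p + q)) :=
    ⟨(natDegree_C_mul_le _ _).trans ((natDegree_add_le _ _).trans (max_le hp.1 hq.1)),
      by simp [hp.2, hq.2]; norm_num⟩
  have h1 := h _ hmid
  have key : sqn ((aeval A (p - q)).mulVec b) + 4 * sqn ((aeval A (C (1/2) * (p + q))).mulVec b)
      = 2 * sqn ((aeval A p).mulVec b) + 2 * sqn ((aeval A q).mulVec b) := by
    rw [← smul_eq_C_mul, map_smul, map_sub, map_add, Matrix.sub_mulVec, Matrix.smul_mulVec,
      Matrix.add_mulVec]
    simp only [sqn, Finset.mul_sum, ← Finset.sum_add_distrib]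
    refine Finset.sum_congr rfl fun i _ => ?_
    simp only [Pi.sub_apply, Pi.smul_apply, Pi.add_apply, smul_eq_mul]
    ring
  apply sqn_eq_zero
  have := sqn_nonneg ((aeval A (p - q)).mulVec b)
  linarith

lemma gmresVal_nonneg_le {n : ℕ} (A : Matrix (Fin n) (Fin n) ℝ) (k : ℕ) (v : Fin n → ℝ)
    (hv : euclNorm v = 1) : gmresVal A k v ≤ 1 := by
  refine csInf_le ⟨0, ?_⟩ ⟨1, isPik_one k, by simp [hv]⟩
  rintro _ ⟨p, _, rfl⟩
  exact Real.sqrt_nonneg _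

lemma Psi_pos {n : ℕ} (A : Matrix (Fin n) (Fin n) ℝ) (k : ℕ) (hk : k < dA A) : 0 < Psi A k := by
  obtain ⟨v, hv⟩ := exists_vec A k hk
  have hv0 : v ≠ 0 := by
    rintro rfl
    exact hv 1 (isPik_one k) (by simp)
  have hs : 0 < euclNorm v :=
    Real.sqrt_pos.2 (lt_of_le_of_ne (sqn_nonneg v) fun h => hv0 (sqn_eq_zero v h.symm))
  set w := (euclNorm v)⁻¹ • v with hw
  have hw1 : euclNorm w = 1 := by
    have : sqn w = 1 := by
      have h2 := euclNorm_sq v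
      have : sqn w = (euclNorm v)⁻¹ ^ 2 * sqn v := by
        simp [sqn, hw, mul_pow, Finset.mul_sum]
      rw [this, ← h2]
      field_simp
    rw [euclNorm_eq, this, Real.sqrt_one]
  obtain ⟨p, hp, hmin⟩ := exists_min A k w w
  have hpos : 0 < euclNorm ((aeval A p).mulVec w) := by
    refine Real.sqrt_pos.2 (lt_of_le_of_ne (sqn_nonneg _) fun h => hv p hp ?_)
    have := sqn_eq_zero _ h.symm
    rw [hw, Matrix.mulVec_smul] at this
    exact (smul_eq_zero.1 this).resolve_left (inv_ne_zero hs.ne')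
  refine lt_of_lt_of_le hpos (le_trans (b := gmresVal A k w) ?_ ?_)
  · refine le_csInf ⟨_, p, hp, rfl⟩ ?_
    rintro _ ⟨q, hq, rfl⟩
    exact Real.sqrt_le_sqrt (by have := hmin q hq; simp only [sqn] at this ⊢; linarith)
  · refine le_csSup ⟨1, ?_⟩ ⟨w, hw1, rfl⟩
    rintro _ ⟨u, hu, rfl⟩
    exact gmresVal_nonneg_le A k u hu

lemma complex_norm {n : ℕ} (A : Matrix (Fin n) (Fin n) ℝ) (b c : Fin n → ℝ) (p : ℝ[X]) :
    euclNormC ((aeval (matC A) (p.map (algebraMap ℝ ℂ))).mulVec fun i => (⟨b i, c i⟩ : ℂ))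
      = Real.sqrt (sqn ((aeval A p).mulVec b) + sqn ((aeval A p).mulVec c)) := by
  have h1 : aeval (matC A) (p.map (algebraMap ℝ ℂ)) = matC (aeval A p) := by
    rw [aeval_map_algebraMap]
    exact (Polynomial.aeval_algHom_apply (Complex.ofRealAm.mapMatrix (m := Fin n)) A p)
  rw [h1, euclNormC, sqn, sqn, ← Finset.sum_add_distrib]
  congr 1
  refine Finset.sum_congr rfl fun i _ => ?_
  rw [Complex.sq_norm, Complex.normSq_apply]
  simp [matC, Matrix.mulVec, dotProduct, pow_two]

/-- If there are two unit norm vectors `b, c` whose `k`-th GMRES polynomials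
`p_b ≠ p_c` are distinct and which are both `k`-th worst-case GMRES initial vectors, then
`Ψ_{k,ℝ,ℝ}(A) < Ψ_{k,ℝ,ℂ}(A)`. -/
theorem two_worst_case_polynomials_imply_strict_complex_gap {n : ℕ}
    (A : Matrix (Fin n) (Fin n) ℝ)
    (hA : IsUnit A) (k : ℕ) (hk1 : 1 ≤ k) (hk2 : k ≤ dA A - 1)
    (b c : Fin n → ℝ) (hb : euclNorm b = 1) (hc : euclNorm c = 1)
    (pb pc : Polynomial ℝ) (hpb : IsGmresPoly A k b pb) (hpc : IsGmresPoly A k c pc)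
    (hne : pb ≠ pc)
    (hwb : euclNorm ((Polynomial.aeval A pb).mulVec b) = Psi A k)
    (hwc : euclNorm ((Polynomial.aeval A pc).mulVec c) = Psi A k) :
    Psi A k < PsiRC A k := by
  have hk : k < dA A := by omega
  have hpos := Psi_pos A k hk
  set P := Psi A k with hP
  have hmb : ∀ q, IsPik k q → P ^ 2 ≤ sqn ((aeval A q).mulVec b) := fun q hq => by
    rw [← euclNorm_sq, ← hwb]
    exact pow_le_pow_left₀ (Real.sqrt_nonneg _) (hpb.2 q hq) 2
  have hmc : ∀ q, IsPik k q → P ^ 2 ≤ sqn ((aeval A q).mulVec c) := fun q hq => by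
    rw [← euclNorm_sq, ← hwc]
    exact pow_le_pow_left₀ (Real.sqrt_nonneg _) (hpc.2 q hq) 2
  set t : ℝ := (Real.sqrt 2)⁻¹ with ht
  have ht2 : t ^ 2 = 1 / 2 := by rw [ht, inv_pow, Real.sq_sqrt (by norm_num)]; norm_num
  have hsc : ∀ (M : Matrix (Fin n) (Fin n) ℝ) (v : Fin n → ℝ),
      sqn (M.mulVec (t • v)) = 1 / 2 * sqn (M.mulVec v) := by
    intro M v
    rw [Matrix.mulVec_smul]
    simp [sqn, mul_pow, ht2, Finset.mul_sum]
  obtain ⟨p, hp, hmin⟩ := exists_min A k (t • b) (t • c)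
  have hstrict : P ^ 2 < sqn ((aeval A p).mulVec (t • b)) + sqn ((aeval A p).mulVec (t • c)) := by
    rw [hsc, hsc]
    have h1 := hmb p hp
    have h2 := hmc p hp
    by_contra hle
    push Not at hle
    have e1 : sqn ((aeval A p).mulVec b) = P ^ 2 := by linarith
    have e2 : sqn ((aeval A p).mulVec c) = P ^ 2 := by linarith
    apply hne
    rw [← unique_poly A hA k b (P ^ 2) (by positivity) hmb p pb hp hpb.1 e1
      (by rw [← euclNorm_sq, hwb])]
    exact unique_poly A hA k c (P ^ 2) (by positivity) hmc p pc hp hpc.1 e2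
      (by rw [← euclNorm_sq, hwc])
  have hx : euclNormC (fun i => (⟨(t • b) i, (t • c) i⟩ : ℂ)) = 1 := by
    have h := complex_norm A (t • b) (t • c) 1
    rw [map_one, hsc, hsc] at h
    simp only [Polynomial.map_one, map_one, Matrix.one_mulVec] at h
    rw [h, ← euclNorm_sq, ← euclNorm_sq, hb, hc]
    norm_num
  refine lt_of_lt_of_le ((Real.lt_sqrt hpos.le).2 hstrict) (le_csSup_of_le ⟨1, ?_⟩
    ⟨_, hx, rfl⟩ ?_)
  · rintro _ ⟨u, hu, rfl⟩
    refine csInf_le ⟨0, ?_⟩ ⟨1, isPik_one k, by simp [hu]⟩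
    rintro _ ⟨q, _, rfl⟩
    exact Real.sqrt_nonneg _
  · refine le_csInf ⟨_, p, hp, rfl⟩ ?_
    rintro _ ⟨q, hq, rfl⟩
    rw [complex_norm]
    exact Real.sqrt_le_sqrt (hmin q hq)
end
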